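/- With H_i and V_j as below, set a_i = m_{r−i+1} + n_s − 1 for i = 1,…,r and b_j = n_{s−j+1} − n_s for j = 1,…,s, and for k = 0, 1, …, m_r + n_s − 1 set g_k = (∏_{i=1}^r H_i^{(a_i−k)_+}) · (∏_{j=1}^s V_j^{(b_j+k)_+}), where (a)_+ = max{a,0} and a factor with nonpositive exponent is taken to be 1. Then the ideal I of the Hadamard fat grid HFG(P_M,Q_N) is generated by the m_r + n_s forms g_0, g_1, …, g_{m_r+n_s−1}, and these form a minimal generating set of I (no proper subset of them generates I). -/

import Mathlib

open MvPolynomial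

noncomputable section

variable {K : Type*} [Field K]

/-- The homogeneous vanishing ideal of the point `P = [p_0:p_1:p_2] ∈ ℙ²`, generated by
the forms `p_j x_i − p_i x_j`. -/
def pointIdeal (p : Fin 3 → K) : Ideal (MvPolynomial (Fin 3) K) :=
  Ideal.span { f | ∃ i j : Fin 3, f = C (p j) * X i - C (p i) * X j }

/-- The ideal of the Hadamard fat grid `HFG(P_M, Q_N)` determined by collinear points
`P_0, …, P_r` and `Q_0, …, Q_s` of `ℙ²` with multiplicities `m` and `n`:
`I = ⋂_{i,j} I(P_i ⋆ Q_j)^{m_i + n_j − 1}`, where `P_i ⋆ Q_j` is the coordinatewise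
product of points. -/
def gridIdeal {r s : ℕ} (P : Fin (r+1) → Fin 3 → K) (Q : Fin (s+1) → Fin 3 → K)
    (m : Fin (r+1) → ℕ) (n : Fin (s+1) → ℕ) : Ideal (MvPolynomial (Fin 3) K) :=
  ⨅ i, ⨅ j, pointIdeal (fun t => P i t * Q j t) ^ (m i + n j - 1)

/-- The `t`-th symbolic power of the ideal of the Hadamard fat grid:
`I^{(t)} = ⋂_{i,j} I(P_i ⋆ Q_j)^{t(m_i + n_j − 1)}`. -/
def gridSymbolicPow {r s : ℕ} (P : Fin (r+1) → Fin 3 → K) (Q : Fin (s+1) → Fin 3 → K)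
    (m : Fin (r+1) → ℕ) (n : Fin (s+1) → ℕ) (t : ℕ) : Ideal (MvPolynomial (Fin 3) K) :=
  ⨅ i, ⨅ j, pointIdeal (fun t' => P i t' * Q j t') ^ (t * (m i + n j - 1))

/-- The `k`-th generator `g_k = (∏_i H_i^{(a_i−k)_+}) · (∏_j V_j^{(b_j+k)_+})` of the
ideal of a Hadamard fat grid, where `a_i = m_{r−i+1} + n_s − 1`, `b_j = n_{s−j+1} − n_s`,
`H_i, V_j` are linear forms with coefficient vectors `H i`, `V j`, and `(a)_+ = max{a,0}`
(a factor with nonpositive exponent is taken to be `1`). Here indices are zero-based, so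
the paper's `index r − i + 1` becomes `Fin.rev i` and `n_s` becomes `n (Fin.last s)`. -/
def gridGen {r s : ℕ} (H : Fin (r+1) → Fin 3 → K) (V : Fin (s+1) → Fin 3 → K)
    (m : Fin (r+1) → ℕ) (n : Fin (s+1) → ℕ) (k : ℕ) : MvPolynomial (Fin 3) K :=
  (∏ i, (∑ t, C (H i t) * X t) ^
      (((m (Fin.rev i) : ℤ) + (n (Fin.last s) : ℤ) - 1 - (k : ℤ)).toNat)) *
  (∏ j, (∑ t, C (V j t) * X t) ^
      (((n (Fin.rev j) : ℤ) - (n (Fin.last s) : ℤ) + (k : ℤ)).toNat))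

/-!
The ideal of a crossing point is generated by the equations `h`, `v` of the two lines through it,
so the fat grid ideal is `⋂ (h i, v j) ^ (a i + b j)₊`, and everything follows from divisibility
properties of the powers of `(h, v)` when `v, h` is a regular sequence and `(h, v)` is prime.

Generation: let `v` be the line `v j` of largest `b j`. Modulo `v`, the ideal only sees the powers
of the `h i`, so an element of it is a multiple of the generator `∏ i, h i ^ (a i + b j)₊` plus
`v * y`, where `y` lies in the ideal of the grid with `b j` lowered by one. The generators of that
smaller grid, multiplied by `v`, are multiples of those of the original one, and induction applies.

Minimality: at the crossing point of the two lines `h`, `v` of largest multiplicity, each generator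
is a monomial `h ^ (d - k) * v ^ k` times an element outside the prime `(h, v)`, and distinct
monomials of degree `d` in a regular sequence are independent modulo `(h, v)`.
-/

section RegularPair

variable {R : Type*} [CommRing R] {h v : R}

theorem dvd_of_dvd_pow_mul (hvh : ∀ x, v ∣ h * x → v ∣ x) {n : ℕ} {x : R}
    (hx : v ∣ h ^ n * x) : v ∣ x := by
  induction n with
  | zero => simpa using hx
  | succ n ih => exact ih (hvh _ (by rwa [← mul_assoc, ← pow_succ']))

theorem mul_mem_span_pair_pow_succ_left (h v : R) {n : ℕ} {x : R}
    (hx : x ∈ Ideal.span {h, v} ^ n) : h * x ∈ Ideal.span {h, v} ^ (n + 1) := by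
  rw [pow_succ']
  exact Ideal.mul_mem_mul (Ideal.subset_span (by simp)) hx

theorem mul_mem_span_pair_pow_succ_right (h v : R) {n : ℕ} {x : R}
    (hx : x ∈ Ideal.span {h, v} ^ n) : v * x ∈ Ideal.span {h, v} ^ (n + 1) := by
  rw [Set.pair_comm] at hx ⊢
  exact mul_mem_span_pair_pow_succ_left v h hx

theorem exists_add_eq_of_mem_span_pair_pow_succ {n : ℕ} {x : R}
    (hx : x ∈ Ideal.span {h, v} ^ (n + 1)) :
    ∃ y ∈ Ideal.span {h, v} ^ n, ∃ z, h * y + v ^ (n + 1) * z = x := by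
  induction n generalizing x with
  | zero =>
    obtain ⟨a, b, rfl⟩ := Ideal.mem_span_pair.1 (by simpa using hx)
    exact ⟨a, by simp, b, by ring⟩
  | succ n ih =>
    rw [pow_succ', Ideal.span_insert h {v}, Ideal.sup_mul, ← Ideal.span_insert h {v},
      Submodule.mem_sup] at hx
    obtain ⟨_, hha, _, hvb, rfl⟩ := hx
    obtain ⟨a, ha, rfl⟩ := Ideal.mem_span_singleton_mul.1 hha
    obtain ⟨b, hb, rfl⟩ := Ideal.mem_span_singleton_mul.1 hvb
    obtain ⟨y, hy, z, rfl⟩ := ih hb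
    exact ⟨a + v * y, Ideal.add_mem _ ha (mul_mem_span_pair_pow_succ_right h v hy), z, by ring⟩

theorem mem_span_pair_pow_of_mul_mem (hv : IsLeftRegular v) (hvh : ∀ x, v ∣ h * x → v ∣ x)
    {n : ℕ} {x : R} (hx : v * x ∈ Ideal.span {h, v} ^ (n + 1)) : x ∈ Ideal.span {h, v} ^ n := by
  induction n generalizing x with
  | zero => simp
  | succ n ih =>
    obtain ⟨y, hy, z, hyz⟩ := exists_add_eq_of_mem_span_pair_pow_succ hx
    obtain ⟨w, rfl⟩ : v ∣ y := hvh y ⟨x - v ^ (n + 1) * z, by linear_combination hyz⟩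
    obtain rfl : h * w + z * v ^ (n + 1) = x := hv (by linear_combination hyz)
    exact Ideal.add_mem _ (mul_mem_span_pair_pow_succ_left h v (ih hy))
      (Ideal.mul_mem_left _ _ (Ideal.pow_mem_pow (Ideal.subset_span (by simp)) _))

theorem mem_span_pow_pair_of_mul_mem (hvh : ∀ x, v ∣ h * x → v ∣ x)
    (hp : (Ideal.span {h, v}).IsPrime) {g : R} (hg : g ∉ Ideal.span {h, v}) {n : ℕ} {x : R}
    (hx : g * x ∈ Ideal.span {h ^ n, v}) : x ∈ Ideal.span {h ^ n, v} := by
  induction n generalizing x with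
  | zero =>
    exact Ideal.mem_span_pair.2 ⟨x, 0, by simp⟩
  | succ n ih =>
    have hle : Ideal.span {h ^ (n + 1), v} ≤ Ideal.span {h ^ n, v} := by
      rw [Ideal.span_le, Set.pair_subset_iff]
      exact ⟨Ideal.mem_of_dvd _ (pow_dvd_pow h n.le_succ) (Ideal.subset_span (by simp)),
        Ideal.subset_span (by simp)⟩
    obtain ⟨y, z, rfl⟩ := Ideal.mem_span_pair.1 (ih (hle hx))
    obtain ⟨y', z', hx⟩ := Ideal.mem_span_pair.1 hx
    obtain ⟨w, hw⟩ : v ∣ g * y - y' * h :=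
      dvd_of_dvd_pow_mul hvh (n := n) ⟨z' - g * z, by linear_combination -hx⟩
    have hy : y ∈ Ideal.span {h, v} := by
      refine (hp.mem_or_mem ?_).resolve_left hg
      exact Ideal.mem_span_pair.2 ⟨y', w, by linear_combination -hw⟩
    obtain ⟨a, b, rfl⟩ := Ideal.mem_span_pair.1 hy
    exact Ideal.mem_span_pair.2 ⟨a, b * h ^ n + z, by ring⟩

theorem span_pair_pow_le_span_pow_pair (h v : R) (n : ℕ) :
    Ideal.span {h, v} ^ n ≤ Ideal.span {h ^ n, v} := by
  intro x hx
  cases n with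
  | zero => exact Ideal.mem_span_pair.2 ⟨x, 0, by simp⟩
  | succ n =>
    rw [Set.pair_comm] at hx
    obtain ⟨y, -, z, rfl⟩ := exists_add_eq_of_mem_span_pair_pow_succ hx
    exact Ideal.mem_span_pair.2 ⟨z, y, by ring⟩

theorem mem_span_pair_pow_of_notMem_mul_mem (hv : IsLeftRegular v)
    (hvh : ∀ x, v ∣ h * x → v ∣ x) (hp : (Ideal.span {h, v}).IsPrime) {g : R}
    (hg : g ∉ Ideal.span {h, v}) {n : ℕ} {x : R}
    (hx : g * x ∈ Ideal.span {h, v} ^ n) : x ∈ Ideal.span {h, v} ^ n := by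
  induction n generalizing x with
  | zero => simp
  | succ n ih =>
    obtain ⟨y, z, rfl⟩ := Ideal.mem_span_pair.1 <|
      mem_span_pow_pair_of_mul_mem hvh hp hg (span_pair_pow_le_span_pow_pair h v _ hx)
    have hh : y * h ^ (n + 1) ∈ Ideal.span {h, v} ^ (n + 1) :=
      Ideal.mul_mem_left _ _ (Ideal.pow_mem_pow (Ideal.subset_span (by simp)) _)
    have hvgz : v * (g * z) ∈ Ideal.span {h, v} ^ (n + 1) := by
      have := Ideal.sub_mem _ hx (Ideal.mul_mem_left _ g hh)
      rwa [show g * (y * h ^ (n + 1) + z * v) - g * (y * h ^ (n + 1)) = v * (g * z) by ring]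
        at this
    rw [mul_comm z v]
    exact Ideal.add_mem _ hh
      (mul_mem_span_pair_pow_succ_right h v (ih (mem_span_pair_pow_of_mul_mem hv hvh hvgz)))

theorem coeff_mem_span_pair_of_sum_eq_zero (hv : IsLeftRegular v)
    (hvh : ∀ x, v ∣ h * x → v ∣ x) {d : ℕ} {c : ℕ → R}
    (hc : ∑ k ∈ Finset.range (d + 1), c k * (h ^ (d - k) * v ^ k) = 0) {k : ℕ} (hk : k ≤ d) :
    c k ∈ Ideal.span {h, v} := by
  induction d generalizing c k with
  | zero =>
    obtain rfl : k = 0 := by omega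
    have : c 0 = 0 := by simpa using hc
    simp [this]
  | succ d ih =>
    have hpeel : v * ∑ k ∈ Finset.range (d + 1), c (k + 1) * (h ^ (d - k) * v ^ k) +
        h ^ (d + 1) * c 0 = 0 := by
      rw [Finset.sum_range_succ'] at hc
      simp only [Nat.add_sub_add_right, pow_succ' v, mul_left_comm _ v, ← Finset.mul_sum] at hc
      simpa only [Nat.sub_zero, pow_zero, mul_one, mul_comm (c 0)] using hc
    -- Modulo `v` only the `k = 0` term survives, so `v` divides `c 0`; absorb that term into the
    -- next one and cancel `v`.
    obtain ⟨e, he⟩ : v ∣ c 0 :=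
      dvd_of_dvd_pow_mul hvh ((dvd_add_right (dvd_mul_right v _)).1 (hpeel ▸ dvd_zero v))
    have hc' : ∑ k ∈ Finset.range (d + 1),
        (c (k + 1) + if k = 0 then h * e else 0) * (h ^ (d - k) * v ^ k) = 0 := by
      refine hv ?_
      simp only [add_mul, Finset.sum_add_distrib, ite_mul, zero_mul, Finset.sum_ite_eq',
        Finset.mem_range, Nat.succ_pos, if_true, Nat.sub_zero, pow_zero, mul_one]
      linear_combination hpeel - h ^ (d + 1) * he
    cases k with
    | zero => exact Ideal.mem_span_pair.2 ⟨0, e, by linear_combination -he⟩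
    | succ k =>
      have hk' := ih hc' (Nat.le_of_succ_le_succ hk)
      refine (Ideal.add_mem_iff_left _ ?_).1 hk'
      split_ifs
      · exact Ideal.mul_mem_right _ _ (Ideal.subset_span (by simp))
      · exact zero_mem _

theorem mul_notMem_span_image_mul (hv : IsLeftRegular v) (hvh : ∀ x, v ∣ h * x → v ∣ x)
    {d k : ℕ} (hk : k ≤ d) {u : ℕ → R} (hu : u k ∉ Ideal.span {h, v}) :
    h ^ (d - k) * v ^ k * u k ∉
      Ideal.span ((fun l => h ^ (d - l) * v ^ l * u l) '' ((Finset.range (d + 1)).erase k)) := by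
  intro hmem
  obtain ⟨c, hc⟩ := (Submodule.mem_span_image_finset_iff_exists_fun' R).1 hmem
  have hk' : k ∈ Finset.range (d + 1) := Finset.mem_range_succ_iff.2 hk
  have hsum : ∑ l ∈ Finset.range (d + 1),
      (if l = k then -u k else c l * u l) * (h ^ (d - l) * v ^ l) = 0 := by
    rw [← Finset.add_sum_erase _ _ hk', if_pos rfl, Finset.sum_congr rfl fun l hl => by
      rw [if_neg (Finset.ne_of_mem_erase hl), mul_assoc, mul_comm (u l), ← smul_eq_mul], hc]
    ring
  have := coeff_mem_span_pair_of_sum_eq_zero hv hvh hsum hk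
  rw [if_pos rfl] at this
  exact hu (neg_mem_iff.1 this)

end RegularPair

section LineGrid

variable {R ι κ : Type*} [CommRing R]

theorem mem_span_prod_pow_pair {h : ι → R} {v : R} (hvh : ∀ i x, v ∣ h i * x → v ∣ x)
    (hp : ∀ i, (Ideal.span {h i, v}).IsPrime) (hne : ∀ i k, k ≠ i → h k ∉ Ideal.span {h i, v})
    (c : ι → ℕ) {s : Finset ι} {f : R} (hf : ∀ i ∈ s, f ∈ Ideal.span {h i ^ c i, v}) :
    f ∈ Ideal.span {∏ i ∈ s, h i ^ c i, v} := by
  classical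
  induction s using Finset.induction_on with
  | empty => exact Ideal.mem_span_pair.2 ⟨f, 0, by simp⟩
  | insert k s hk ih =>
    obtain ⟨hfk, hfs⟩ := Finset.forall_mem_insert .. |>.1 hf
    obtain ⟨a, b, rfl⟩ := Ideal.mem_span_pair.1 (ih hfs)
    have hprod : ∏ i ∈ s, h i ^ c i ∉ Ideal.span {h k, v} := by
      have := hp k
      rw [Ideal.IsPrime.prod_mem_iff]
      rintro ⟨i, hi, hmem⟩
      exact hne k i (by rintro rfl; exact hk hi) (this.mem_of_pow_mem _ hmem)
    have ha : a ∈ Ideal.span {h k ^ c k, v} := by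
      refine mem_span_pow_pair_of_mul_mem (hvh k) (hp k) hprod ?_
      rw [mul_comm]
      exact (Ideal.add_mem_iff_left _ (Ideal.mul_mem_left _ _ (Ideal.subset_span (by simp)))).1 hfk
    obtain ⟨x, y, rfl⟩ := Ideal.mem_span_pair.1 ha
    rw [Finset.prod_insert hk]
    exact Ideal.mem_span_pair.2 ⟨x, y * ∏ i ∈ s, h i ^ c i + b, by ring⟩

/-- Elements `h i` and `v j` of a ring that behave like the equations of the lines of a grid:
each `v j, h i` is a regular sequence generating a prime ideal, the ideal of the crossing point
`(i, j)`, which contains the equation of no other line. -/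
structure IsLineGrid (h : ι → R) (v : κ → R) : Prop where
  isLeftRegular : ∀ j, IsLeftRegular (v j)
  dvd_of_dvd_mul : ∀ i j x, v j ∣ h i * x → v j ∣ x
  isPrime : ∀ i j, (Ideal.span {h i, v j}).IsPrime
  left_notMem : ∀ i j k, k ≠ i → h k ∉ Ideal.span {h i, v j}
  right_notMem : ∀ i j l, l ≠ j → v l ∉ Ideal.span {h i, v j}

/-- The ideal of the scheme of fat points supported on the crossing points `(i, j)` of a grid of
lines, with multiplicity `(a i + b j)₊` at `(i, j)`. -/
def crossingIdeal (h : ι → R) (v : κ → R) (a : ι → ℤ) (b : κ → ℤ) : Ideal R :=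
  ⨅ i, ⨅ j, Ideal.span {h i, v j} ^ (a i + b j).toNat

theorem mem_crossingIdeal {h : ι → R} {v : κ → R} {a : ι → ℤ} {b : κ → ℤ} {f : R} :
    f ∈ crossingIdeal h v a b ↔ ∀ i j, f ∈ Ideal.span {h i, v j} ^ (a i + b j).toNat := by
  simp only [crossingIdeal, Ideal.mem_iInf]

variable [Fintype ι] [Fintype κ]

/-- The product of powers of the lines of a grid with multiplicity `(a i - k)₊` along `h i` and
`(b j + k)₊` along `v j`. Letting `k` and the exponents be integers turns `gridGen` into a special
case which is stable under lowering an entry of `b`. -/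
def crossingGen (h : ι → R) (v : κ → R) (a : ι → ℤ) (b : κ → ℤ) (k : ℤ) : R :=
  (∏ i, h i ^ (a i - k).toNat) * ∏ j, v j ^ (b j + k).toNat

variable {h : ι → R} {v : κ → R} {a : ι → ℤ} {b : κ → ℤ}

theorem crossingGen_mem_crossingIdeal (k : ℤ) :
    crossingGen h v a b k ∈ crossingIdeal h v a b := by
  refine mem_crossingIdeal.2 fun i j => ?_
  refine Ideal.mem_of_dvd _ (mul_dvd_mul (Finset.dvd_prod_of_mem _ (Finset.mem_univ i))
    (Finset.dvd_prod_of_mem _ (Finset.mem_univ j))) ?_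
  refine Ideal.pow_le_pow_right (by omega : _ ≤ (a i - k).toNat + (b j + k).toNat) ?_
  rw [pow_add]
  exact Ideal.mul_mem_mul (Ideal.pow_mem_pow (Ideal.subset_span (by simp)) _)
    (Ideal.pow_mem_pow (Ideal.subset_span (by simp)) _)

theorem crossingGen_dvd_crossingGen {k l : ℤ} (hl : ∀ i, (a i - k).toNat ≤ (a i - l).toNat)
    (hk : ∀ j, (b j + k).toNat ≤ (b j + l).toNat) :
    crossingGen h v a b k ∣ crossingGen h v a b l :=
  mul_dvd_mul (Finset.prod_dvd_prod_of_dvd _ _ fun i _ => pow_dvd_pow _ (hl i))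
    (Finset.prod_dvd_prod_of_dvd _ _ fun j _ => pow_dvd_pow _ (hk j))

theorem span_range_crossingGen_le_span_image_Icc {lo hi : ℤ} (hlh : lo ≤ hi)
    (ha : ∀ i, a i ≤ hi) (hb : ∀ j, b j + lo ≤ 0) :
    Ideal.span (Set.range (crossingGen h v a b)) ≤
      Ideal.span (crossingGen h v a b '' Set.Icc lo hi) := by
  rw [Ideal.span_le]
  rintro _ ⟨k, rfl⟩
  refine Ideal.mem_of_dvd _ (crossingGen_dvd_crossingGen (k := max lo (min hi k))
    (fun i => ?_) fun j => ?_) (Ideal.subset_span ⟨_, ⟨by omega, by omega⟩, rfl⟩)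
  · have := ha i
    omega
  · have := hb j
    omega

theorem crossingGen_neg_of_forall_le {j₀ : κ} (hj₀ : ∀ j, b j ≤ b j₀) :
    crossingGen h v a b (-b j₀) = ∏ i, h i ^ (a i + b j₀).toNat := by
  have hv : ∏ j, v j ^ (b j + -b j₀).toNat = 1 := Finset.prod_eq_one fun j _ => by
    rw [Int.toNat_of_nonpos (by linarith [hj₀ j]), pow_zero]
  simp only [crossingGen, hv, mul_one, sub_neg_eq_add]

theorem crossingGen_eq_mul_crossingGen_update [DecidableEq κ] {j₀ : κ} {k : ℤ}
    (hk : 0 < b j₀ + k) : crossingGen h v a b k =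
      v j₀ * crossingGen h v a (Function.update b j₀ (b j₀ - 1)) k := by
  have hpow : ∀ j, v j ^ (b j + k).toNat = v j ^ (if j = j₀ then 1 else 0) *
      v j ^ (Function.update b j₀ (b j₀ - 1) j + k).toNat := by
    intro j
    rw [← pow_add]
    congr 1
    rcases eq_or_ne j j₀ with rfl | hj
    · rw [if_pos rfl, Function.update_self]
      omega
    · rw [if_neg hj, Function.update_of_ne hj, zero_add]
  simp only [crossingGen, hpow, Finset.prod_mul_distrib]
  simp only [pow_ite, pow_one, pow_zero, Finset.prod_ite_eq', Finset.mem_univ, if_true]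
  ring

theorem mul_mem_span_range_crossingGen [DecidableEq κ] {j₀ : κ} (hj₀ : ∀ j, b j ≤ b j₀) {f : R}
    (hf : f ∈ Ideal.span (Set.range (crossingGen h v a (Function.update b j₀ (b j₀ - 1))))) :
    v j₀ * f ∈ Ideal.span (Set.range (crossingGen h v a b)) := by
  induction hf using Submodule.span_induction with
  | zero => simp
  | add x y _ _ hx hy =>
    rw [mul_add]
    exact Ideal.add_mem _ hx hy
  | smul r x _ hx =>
    rw [smul_eq_mul, mul_left_comm]
    exact Ideal.mul_mem_left _ r hx
  | mem x hx =>
    obtain ⟨k, rfl⟩ := hx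
    rcases lt_or_ge 0 (b j₀ + k) with hk | hk
    · rw [← crossingGen_eq_mul_crossingGen_update hk]
      exact Ideal.subset_span ⟨k, rfl⟩
    · refine Ideal.mul_mem_left _ _ (Ideal.mem_of_dvd _ ?_ (Ideal.subset_span ⟨-b j₀, rfl⟩))
      rw [crossingGen_neg_of_forall_le hj₀]
      exact (Finset.prod_dvd_prod_of_dvd _ _ fun i _ =>
        pow_dvd_pow _ (Int.toNat_le_toNat (by linarith))).mul_right _

namespace IsLineGrid

theorem exists_eq_mul_add_of_mem_crossingIdeal [DecidableEq κ] (hg : IsLineGrid h v) {j₀ : κ}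
    (hj₀ : ∀ j, b j ≤ b j₀) {f : R} (hf : f ∈ crossingIdeal h v a b) :
    ∃ x, ∃ y ∈ crossingIdeal h v a (Function.update b j₀ (b j₀ - 1)),
      f = x * crossingGen h v a b (-b j₀) + v j₀ * y := by
  have hf' : f ∈ Ideal.span {crossingGen h v a b (-b j₀), v j₀} := by
    rw [crossingGen_neg_of_forall_le hj₀]
    exact mem_span_prod_pow_pair (fun i => hg.dvd_of_dvd_mul i j₀) (fun i => hg.isPrime i j₀)
      (fun i => hg.left_notMem i j₀) _
      fun i _ => span_pair_pow_le_span_pow_pair _ _ _ (mem_crossingIdeal.1 hf i j₀)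
  obtain ⟨x, y, rfl⟩ := Ideal.mem_span_pair.1 hf'
  refine ⟨x, y, mem_crossingIdeal.2 fun i j => ?_, by rw [mul_comm y]⟩
  have hvy : v j₀ * y ∈ Ideal.span {h i, v j} ^ (a i + b j).toNat := by
    rw [mul_comm]
    exact (Ideal.add_mem_iff_right _ (Ideal.mul_mem_left _ _
      (mem_crossingIdeal.1 (crossingGen_mem_crossingIdeal _) i j))).1 (mem_crossingIdeal.1 hf i j)
  rcases eq_or_ne j j₀ with rfl | hj
  · rw [Function.update_self]
    rcases le_or_gt (a i + b j) 0 with hab | hab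
    · rw [Int.toNat_of_nonpos (by linarith), pow_zero, Ideal.one_eq_top]
      exact Submodule.mem_top
    · refine mem_span_pair_pow_of_mul_mem (hg.isLeftRegular j) (hg.dvd_of_dvd_mul i j) ?_
      rwa [show (a i + (b j - 1)).toNat + 1 = (a i + b j).toNat by omega]
  · rw [Function.update_of_ne hj]
    exact mem_span_pair_pow_of_notMem_mul_mem (hg.isLeftRegular j) (hg.dvd_of_dvd_mul i j)
      (hg.isPrime i j) (hg.right_notMem i j j₀ hj.symm) hvy

theorem crossingIdeal_le_span_range (hg : IsLineGrid h v) :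
    crossingIdeal h v a b ≤ Ideal.span (Set.range (crossingGen h v a b)) := by
  classical
  obtain ⟨A, hA⟩ := (Set.finite_range a).bddAbove
  replace hA : ∀ i, a i ≤ A := fun i => hA ⟨i, rfl⟩
  intro f hf
  -- Each peeling step lowers the total excess `∑ j, (b j + A)₊`; once it is zero, `g_A = 1`.
  induction hN : ∑ j, (b j + A).toNat using Nat.strong_induction_on generalizing b f with
  | _ N ih =>
  by_cases hb : ∀ j, b j + A ≤ 0
  · have hgen : crossingGen h v a b A = 1 := by
      rw [crossingGen, Finset.prod_eq_one fun i _ => ?_, Finset.prod_eq_one fun j _ => ?_, one_mul]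
      · rw [Int.toNat_of_nonpos (hb j), pow_zero]
      · rw [Int.toNat_of_nonpos (by linarith [hA i]), pow_zero]
    have htop : Ideal.span (Set.range (crossingGen h v a b)) = ⊤ :=
      (Ideal.eq_top_iff_one _).2 (Ideal.subset_span ⟨A, hgen⟩)
    rw [htop]
    exact Submodule.mem_top
  · push Not at hb
    obtain ⟨j₁, hj₁⟩ := hb
    obtain ⟨j₀, -, hj₀⟩ := Finset.exists_max_image Finset.univ b ⟨j₁, Finset.mem_univ _⟩
    replace hj₀ : ∀ j, b j ≤ b j₀ := fun j => hj₀ j (Finset.mem_univ _)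
    obtain ⟨x, y, hy, rfl⟩ := hg.exists_eq_mul_add_of_mem_crossingIdeal hj₀ hf
    refine Ideal.add_mem _ (Ideal.mul_mem_left _ _ (Ideal.subset_span ⟨_, rfl⟩))
      (mul_mem_span_range_crossingGen hj₀ (ih _ ?_ hy rfl))
    rw [← hN]
    refine Finset.sum_lt_sum (fun j _ => ?_) ⟨j₀, Finset.mem_univ _, ?_⟩
    · rcases eq_or_ne j j₀ with rfl | hj
      · rw [Function.update_self]
        omega
      · rw [Function.update_of_ne hj]
    · have := hj₀ j₁
      rw [Function.update_self]
      omega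

theorem span_image_Icc_eq_crossingIdeal (hg : IsLineGrid h v) {lo hi : ℤ} (hlh : lo ≤ hi)
    (ha : ∀ i, a i ≤ hi) (hb : ∀ j, b j + lo ≤ 0) :
    Ideal.span (crossingGen h v a b '' Set.Icc lo hi) = crossingIdeal h v a b := by
  refine le_antisymm (Ideal.span_le.2 ?_)
    (hg.crossingIdeal_le_span_range.trans (span_range_crossingGen_le_span_image_Icc hlh ha hb))
  rintro _ ⟨k, -, rfl⟩
  exact crossingGen_mem_crossingIdeal k

theorem exists_crossingGen_eq_pow_mul_pow_mul (hg : IsLineGrid h v) (i₀ : ι) (j₀ : κ) :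
    ∃ u : ℕ → R, (∀ l, u l ∉ Ideal.span {h i₀, v j₀}) ∧ ∀ l : ℕ,
      crossingGen h v a b (l - b j₀) = h i₀ ^ ((a i₀ + b j₀).toNat - l) * v j₀ ^ l * u l := by
  classical
  refine ⟨fun l => (∏ i ∈ Finset.univ.erase i₀, h i ^ (a i - (l - b j₀)).toNat) *
    ∏ j ∈ Finset.univ.erase j₀, v j ^ (b j + (l - b j₀)).toNat, fun l => ?_, fun l => ?_⟩
  · have hp := hg.isPrime i₀ j₀
    refine fun hmem => (hp.mem_or_mem hmem).elim ?_ ?_ <;> rw [Ideal.IsPrime.prod_mem_iff]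
    · rintro ⟨i, hi, hmem⟩
      exact hg.left_notMem i₀ j₀ i (Finset.ne_of_mem_erase hi) (hp.mem_of_pow_mem _ hmem)
    · rintro ⟨j, hj, hmem⟩
      exact hg.right_notMem i₀ j₀ j (Finset.ne_of_mem_erase hj) (hp.mem_of_pow_mem _ hmem)
  · rw [crossingGen, ← Finset.mul_prod_erase _ _ (Finset.mem_univ i₀),
      ← Finset.mul_prod_erase _ (fun j => v j ^ _) (Finset.mem_univ j₀), mul_mul_mul_comm]
    congr 3 <;> omega

theorem crossingGen_notMem_span_image (hg : IsLineGrid h v) (i₀ : ι) (j₀ : κ) {k : ℤ}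
    (hk : k ∈ Set.Icc (-b j₀) (a i₀)) : crossingGen h v a b k ∉
      Ideal.span (crossingGen h v a b '' (Set.Icc (-b j₀) (a i₀) \ {k})) := by
  obtain ⟨u, hu, hgen⟩ := hg.exists_crossingGen_eq_pow_mul_pow_mul (a := a) (b := b) i₀ j₀
  have hcast : ∀ l, -b j₀ ≤ l → l = ((l + b j₀).toNat : ℤ) - b j₀ := fun l hl => by omega
  have hgen' : ∀ l, -b j₀ ≤ l → crossingGen h v a b l = _ := fun l hl =>
    (congrArg _ (hcast l hl)).trans (hgen _)
  intro hmem
  have hkd : (k + b j₀).toNat ≤ (a i₀ + b j₀).toNat := Int.toNat_le_toNat (by linarith [hk.2])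
  refine mul_notMem_span_image_mul (hg.isLeftRegular j₀) (hg.dvd_of_dvd_mul i₀ j₀) hkd (hu _) ?_
  rw [← hgen' k hk.1]
  refine Ideal.span_mono ?_ hmem
  rintro _ ⟨l, ⟨⟨hl, hla⟩, hlk : l ≠ k⟩, rfl⟩
  refine ⟨(l + b j₀).toNat, ?_, (hgen' l hl).symm⟩
  have hk' := hk.1
  simp only [Finset.coe_erase, Finset.coe_range, Set.mem_sdiff, Set.mem_Iio,
    Set.mem_singleton_iff]
  omega

theorem span_ne_crossingIdeal_of_ssubset (hg : IsLineGrid h v) {i₀ : ι} {j₀ : κ} {T : Set R}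
    (hT : T ⊂ crossingGen h v a b '' Set.Icc (-b j₀) (a i₀)) :
    Ideal.span T ≠ crossingIdeal h v a b := by
  obtain ⟨_, ⟨k, hk, rfl⟩, hkT⟩ := Set.exists_of_ssubset hT
  intro hspan
  refine hg.crossingGen_notMem_span_image i₀ j₀ hk
    (Ideal.span_mono (fun x hx => ?_) (hspan.symm ▸ crossingGen_mem_crossingIdeal k))
  obtain ⟨l, hl, rfl⟩ := hT.subset hx
  exact ⟨l, ⟨hl, by rintro rfl; exact hkT hx⟩, rfl⟩

end IsLineGrid

end LineGrid

section LinForm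

open scoped Matrix

variable {σ : Type*}

/-- The restriction of polynomials to the parametrized line `T ↦ T • q` through the origin. It is
used to identify the ideal of the projective point `q` as a kernel. -/
def restrictLine (q : σ → K) : MvPolynomial σ K →ₐ[K] Polynomial K :=
  aeval fun t => Polynomial.C (q t) * Polynomial.X

variable [Fintype σ]

/-- The linear form with coefficient vector `w`, as a linear function of `w`: vector identities
become identities between the equations of lines. -/
def linForm : (σ → K) →ₗ[K] MvPolynomial σ K where
  toFun w := ∑ t, C (w t) * X t
  map_add' w w' := by simp only [Pi.add_apply, C_add, add_mul, Finset.sum_add_distrib]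
  map_smul' c w := by
    simp only [Pi.smul_apply, smul_eq_mul, C_mul, mul_assoc, ← Finset.mul_sum, smul_eq_C_mul,
      RingHom.id_apply]

theorem linForm_apply (w : σ → K) : linForm w = ∑ t, C (w t) * X t := rfl

theorem linForm_single_one [DecidableEq σ] (t : σ) : linForm (Pi.single t (1 : K)) = X t := by
  simp [linForm_apply, Pi.single_apply, apply_ite C]

theorem eval_linForm (w x : σ → K) : eval x (linForm w) = w ⬝ᵥ x := by
  simp [linForm_apply, dotProduct]

theorem coeff_single_linForm (w : σ → K) (t : σ) :
    (linForm w).coeff (Finsupp.single t 1) = w t := by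
  classical
  simp [linForm_apply, coeff_sum, coeff_C_mul, coeff_X, Finsupp.single_left_inj]

theorem restrictLine_linForm (q w : σ → K) :
    restrictLine q (linForm w) = Polynomial.C (w ⬝ᵥ q) * Polynomial.X := by
  simp [linForm_apply, restrictLine, dotProduct, map_sum, Finset.sum_mul, mul_assoc,
    Polynomial.algebraMap_eq]

theorem prime_linForm {w : σ → K} (hw : w ≠ 0) : Prime (linForm w) := by
  obtain ⟨t, ht⟩ := Function.ne_iff.1 hw
  have hdeg : (linForm w).totalDegree = 1 := by
    refine le_antisymm ?_ ?_
    · exact totalDegree_finsetSum_le fun i _ => (totalDegree_mul _ _).trans (by simp)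
    · have hmem : Finsupp.single t 1 ∈ (linForm w).support := by
        rwa [mem_support_iff, coeff_single_linForm]
      simpa using le_totalDegree hmem
  rw [← UniqueFactorizationMonoid.irreducible_iff_prime]
  refine irreducible_of_totalDegree_eq_one hdeg fun c hc => ?_
  have hct := hc (Finsupp.single t 1)
  rw [coeff_single_linForm] at hct
  exact isUnit_of_dvd_unit hct (isUnit_iff_ne_zero.2 ht)

end LinForm

section PointIdeal

open scoped Matrix

theorem not_linForm_dvd_linForm {v w : Fin 3 → K} (h : LinearIndependent K ![v, w]) :
    ¬ linForm w ∣ linForm v := by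
  obtain ⟨k, hk⟩ := Function.ne_iff.1 (crossProduct_ne_zero_iff_linearIndependent.2 h)
  intro hdvd
  have heval := map_dvd (eval (w ⨯₃ Pi.single k 1)) hdvd
  rw [eval_linForm, eval_linForm, dot_self_cross, zero_dvd_iff, triple_product_permutation,
    triple_product_permutation, single_one_dotProduct] at heval
  exact hk heval

theorem pointIdeal_eq_ker {q : Fin 3 → K} (hq : q ≠ 0) :
    pointIdeal q = RingHom.ker (restrictLine q) := by
  refine le_antisymm (Ideal.span_le.2 ?_) fun f hf => ?_
  · rintro _ ⟨i, j, rfl⟩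
    rw [SetLike.mem_coe, RingHom.mem_ker]
    simp only [restrictLine, map_sub, map_mul, aeval_X, algHom_C, Polynomial.algebraMap_eq]
    ring
  · obtain ⟨k, hk⟩ := Function.ne_iff.1 hq
    let lift : Polynomial K →ₐ[K] MvPolynomial (Fin 3) K ⧸ pointIdeal q :=
      Polynomial.aeval (Ideal.Quotient.mk _ (C (q k)⁻¹ * X k))
    have hlift : lift.comp (restrictLine q) = Ideal.Quotient.mkₐ K (pointIdeal q) := by
      refine algHom_ext fun i => ?_
      have hmem : C (q i) * (C (q k)⁻¹ * X k) - X i ∈ pointIdeal q := by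
        refine Set.mem_of_eq_of_mem ?_
          (Ideal.mul_mem_left _ (-C (q k)⁻¹) (Ideal.subset_span ⟨i, k, rfl⟩))
        have hinv : C (σ := Fin 3) (q k)⁻¹ * C (q k) = 1 := by
          rw [← C_mul, inv_mul_cancel₀ hk, C_1]
        linear_combination (X i) * hinv
      simp only [AlgHom.comp_apply, restrictLine, lift, aeval_X, map_mul, Polynomial.aeval_C,
        Polynomial.aeval_X, Ideal.Quotient.mkₐ_eq_mk]
      exact Ideal.Quotient.eq.2 hmem
    rw [← Ideal.Quotient.eq_zero_iff_mem, ← Ideal.Quotient.mkₐ_eq_mk K, ← hlift,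
      AlgHom.comp_apply, (RingHom.mem_ker).1 hf, map_zero]

theorem isPrime_pointIdeal {q : Fin 3 → K} (hq : q ≠ 0) : (pointIdeal q).IsPrime := by
  rw [pointIdeal_eq_ker hq]
  exact RingHom.ker_isPrime _

theorem linForm_mem_pointIdeal_iff {q : Fin 3 → K} (hq : q ≠ 0) {w : Fin 3 → K} :
    linForm w ∈ pointIdeal q ↔ w ⬝ᵥ q = 0 := by
  rw [pointIdeal_eq_ker hq, RingHom.mem_ker, restrictLine_linForm]
  simp

theorem exists_cross_eq_smul {q v w : Fin 3 → K} (hq : q ≠ 0) (hv : v ⬝ᵥ q = 0)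
    (hw : w ⬝ᵥ q = 0) : ∃ c : K, v ⨯₃ w = c • q := by
  have hcross : q ⨯₃ (v ⨯₃ w) = 0 := by
    rw [cross_cross_eq_smul_sub_smul', dotProduct_comm q w, hw, hv, zero_smul, zero_smul,
      sub_zero]
  have hdep : ¬ LinearIndependent K ![q, v ⨯₃ w] := fun h =>
    crossProduct_ne_zero_iff_linearIndependent.2 h hcross
  rw [LinearIndependent.pair_iff' hq] at hdep
  push Not at hdep
  exact hdep.imp fun c hc => hc.symm

theorem span_linForm_pair_eq_pointIdeal {q v w : Fin 3 → K} (hq : q ≠ 0)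
    (h : LinearIndependent K ![v, w]) (hv : v ⬝ᵥ q = 0) (hw : w ⬝ᵥ q = 0) :
    Ideal.span {linForm v, linForm w} = pointIdeal q := by
  refine le_antisymm (Ideal.span_le.2 ?_) (Ideal.span_le.2 ?_)
  · rintro _ (rfl | rfl)
    exacts [(linForm_mem_pointIdeal_iff hq).2 hv, (linForm_mem_pointIdeal_iff hq).2 hw]
  · obtain ⟨c, hc⟩ := exists_cross_eq_smul hq hv hw
    have hc0 : c ≠ 0 := by
      rintro rfl
      exact crossProduct_ne_zero_iff_linearIndependent.2 h (by rw [hc, zero_smul])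
    rintro _ ⟨i, j, rfl⟩
    -- `q` is proportional to `v ⨯₃ w`, and `v ⨯₃ w ⨯₃ u` is a linear combination of `v` and `w`.
    have hij : C (q j) * X i - C (q i) * X j =
        linForm (c⁻¹ • (v ⨯₃ w ⨯₃ (Pi.single i 1 ⨯₃ Pi.single j 1))) := by
      rw [hc, map_smul crossProduct, LinearMap.smul_apply, smul_smul, inv_mul_cancel₀ hc0, one_smul,
        cross_cross_eq_smul_sub_smul', map_sub, map_smul, map_smul, linForm_single_one,
        linForm_single_one, dotProduct_single_one, single_one_dotProduct, smul_eq_C_mul,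
        smul_eq_C_mul]
    rw [SetLike.mem_coe, hij, cross_cross_eq_smul_sub_smul, map_smul, map_sub, map_smul, map_smul]
    exact Submodule.smul_of_tower_mem _ _ (sub_mem
      (Submodule.smul_of_tower_mem _ _ (Ideal.subset_span (by simp)))
      (Submodule.smul_of_tower_mem _ _ (Ideal.subset_span (by simp))))

end PointIdeal

section Grid

open scoped Matrix

theorem linearIndependent_pair_of_forall_ne_smul {E : Type*} [AddCommGroup E] [Module K E]
    {v w : E} (hw : ∀ c : K, w ≠ c • v) (hv : ∀ c : K, v ≠ c • w) :
    LinearIndependent K ![v, w] := by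
  have hv0 : v ≠ 0 := fun h => hv 0 (by rw [h, zero_smul])
  exact (LinearIndependent.pair_iff' hv0).2 fun c hc => hw c hc.symm

theorem isLineGrid_linForm {ι κ : Type*} [Nonempty ι] {p : ι → κ → Fin 3 → K}
    {H : ι → Fin 3 → K} {V : κ → Fin 3 → K} (hp : ∀ i j, p i j ≠ 0)
    (hli : ∀ i j, LinearIndependent K ![H i, V j])
    (hH : ∀ i j, H i ⬝ᵥ p i j = 0) (hV : ∀ i j, V j ⬝ᵥ p i j = 0)
    (hHnot : ∀ i j k, k ≠ i → H k ⬝ᵥ p i j ≠ 0) (hVnot : ∀ i j l, l ≠ j → V l ⬝ᵥ p i j ≠ 0) :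
    IsLineGrid (fun i => linForm (H i)) (fun j => linForm (V j)) := by
  have hspan : ∀ i j, Ideal.span {linForm (H i), linForm (V j)} = pointIdeal (p i j) :=
    fun i j => span_linForm_pair_eq_pointIdeal (hp i j) (hli i j) (hH i j) (hV i j)
  have hprime : ∀ j, Prime (linForm (V j)) := fun j =>
    prime_linForm ((hli (Classical.arbitrary ι) j).ne_zero 1)
  refine ⟨fun j => IsLeftCancelMulZero.mul_left_cancel_of_ne_zero (hprime j).ne_zero,
    fun i j x hdvd => ((hprime j).dvd_or_dvd hdvd).resolve_left (not_linForm_dvd_linForm (hli i j)),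
    fun i j => ?_, fun i j k hk => ?_, fun i j l hl => ?_⟩ <;> rw [hspan]
  · exact isPrime_pointIdeal (hp i j)
  · rw [linForm_mem_pointIdeal_iff (hp i j)]
    exact hHnot i j k hk
  · rw [linForm_mem_pointIdeal_iff (hp i j)]
    exact hVnot i j l hl

variable {r s : ℕ} {p : Fin (r + 1) → Fin (s + 1) → Fin 3 → K} {m : Fin (r + 1) → ℕ}
  {n : Fin (s + 1) → ℕ} {H : Fin (r + 1) → Fin 3 → K} {V : Fin (s + 1) → Fin 3 → K}

theorem range_gridGen_eq_image_crossingGen :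
    Set.range (fun k : Fin (m (Fin.last r) + n (Fin.last s)) => gridGen H V m n k) =
      crossingGen (fun i => linForm (H i)) (fun j => linForm (V j))
        (fun i => (m i.rev : ℤ) + n (Fin.last s) - 1) (fun j => (n j.rev : ℤ) - n (Fin.last s)) ''
        Set.Icc 0 (m (Fin.last r) + n (Fin.last s) - 1) := by
  ext f
  constructor
  · rintro ⟨k, rfl⟩
    exact ⟨k, ⟨by omega, by omega⟩, rfl⟩
  · rintro ⟨k, ⟨hk₀, hk₁⟩, rfl⟩
    lift k to ℕ using hk₀
    exact ⟨⟨k, by omega⟩, rfl⟩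

theorem iInf_pointIdeal_pow_eq_crossingIdeal
    (hspan : ∀ i j, Ideal.span {linForm (H i), linForm (V j)} = pointIdeal (p i.rev j.rev)) :
    ⨅ i, ⨅ j, pointIdeal (p i j) ^ (m i + n j - 1) =
      crossingIdeal (fun i => linForm (H i)) (fun j => linForm (V j))
        (fun i => (m i.rev : ℤ) + n (Fin.last s) - 1)
        (fun j => (n j.rev : ℤ) - n (Fin.last s)) := by
  refine Fin.revPerm.iInf_congr fun i => Fin.revPerm.iInf_congr fun j => ?_
  simp only [Fin.revPerm_apply, hspan, Fin.rev_rev]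
  congr 1
  omega

theorem gridIdeal_eq_span_gridGen_general (hmn : ∀ i j, 1 ≤ m i + n j)
    (hm : ∀ i, m i ≤ m (Fin.last r)) (hn : ∀ j, n j ≤ n (Fin.last s)) (hp : ∀ i j, p i j ≠ 0)
    (hli : ∀ i j, LinearIndependent K ![H i, V j])
    (hH : ∀ i j, H i ⬝ᵥ p i.rev j = 0) (hV : ∀ j i, V j ⬝ᵥ p i j.rev = 0)
    (hHnot : ∀ i j k, k ≠ i.rev → H k ⬝ᵥ p i j ≠ 0)
    (hVnot : ∀ i j l, l ≠ j.rev → V l ⬝ᵥ p i j ≠ 0) :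
    Ideal.span (Set.range fun k : Fin (m (Fin.last r) + n (Fin.last s)) => gridGen H V m n k) =
      ⨅ i, ⨅ j, pointIdeal (p i j) ^ (m i + n j - 1) ∧
    ∀ T : Set (MvPolynomial (Fin 3) K),
      T ⊂ Set.range (fun k : Fin (m (Fin.last r) + n (Fin.last s)) => gridGen H V m n k) →
      Ideal.span T ≠ ⨅ i, ⨅ j, pointIdeal (p i j) ^ (m i + n j - 1) := by
  have hgrid : IsLineGrid (fun i => linForm (H i)) (fun j => linForm (V j)) :=
    isLineGrid_linForm (p := fun i j => p i.rev j.rev) (fun i j => hp _ _) hli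
      (fun i j => hH i _) (fun i j => hV j _)
      (fun i j k hk => hHnot _ _ _ (by rwa [Fin.rev_rev]))
      (fun i j l hl => hVnot _ _ _ (by rwa [Fin.rev_rev]))
  have hlast := hmn (Fin.last r) (Fin.last s)
  rw [range_gridGen_eq_image_crossingGen, iInf_pointIdeal_pow_eq_crossingIdeal fun i j =>
    span_linForm_pair_eq_pointIdeal (hp _ _) (hli i j) (hH i _) (hV j _)]
  refine ⟨hgrid.span_image_Icc_eq_crossingIdeal (by omega) (fun i => ?_) (fun j => ?_),
    fun T hT => hgrid.span_ne_crossingIdeal_of_ssubset (i₀ := 0) (j₀ := 0) ?_⟩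
  · have := hm i.rev
    omega
  · have := hn j.rev
    omega
  · simpa using hT

end Grid

/-- With `H_i` the linear forms of the horizontal grid lines and `V_j` those of the
vertical grid lines, the `m_r + n_s` forms `g_0, …, g_{m_r+n_s−1}` generate the ideal of
the Hadamard fat grid `HFG(P_M, Q_N)` minimally (no proper subset of them generates). -/
theorem gridIdeal_eq_span_gridGen [IsAlgClosed K]
    {r s : ℕ} (hrs : r ≤ s) (P : Fin (r+1) → Fin 3 → K) (Q : Fin (s+1) → Fin 3 → K)
    (hP0 : ∀ i t, P i t ≠ 0) (hQ0 : ∀ j t, Q j t ≠ 0)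
    (hPcol : ∃ a : Fin 3 → K, a ≠ 0 ∧ ∀ i, ∑ t, a t * P i t = 0)
    (hQcol : ∃ b : Fin 3 → K, b ≠ 0 ∧ ∀ j, ∑ t, b t * Q j t = 0)
    (m : Fin (r+1) → ℕ) (n : Fin (s+1) → ℕ)
    (hm1 : ∀ i, 1 ≤ m i) (hn1 : ∀ j, 1 ≤ n j) (hm : Monotone m) (hn : Monotone n)
    (hdist : ∀ i j k l, (i, j) ≠ ((k, l) : Fin (r+1) × Fin (s+1)) →
      pointIdeal (fun t => P i t * Q j t) ≠ pointIdeal (fun t => P k t * Q l t))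
    (H : Fin (r+1) → Fin 3 → K) (V : Fin (s+1) → Fin 3 → K)
    -- the linear forms `H_i`, `V_j` are pairwise non-proportional
    (hnp : ∀ a b : Fin (r+1) ⊕ Fin (s+1), a ≠ b → ∀ c : K,
      Sum.elim H V b ≠ c • Sum.elim H V a)
    -- `H_i` vanishes at `P_{r−i+1} ⋆ Q_j` for all `j`
    (hH : ∀ (i : Fin (r+1)) (j : Fin (s+1)), ∑ t, H i t * (P (Fin.rev i) t * Q j t) = 0)
    -- `V_j` vanishes at `P_i ⋆ Q_{s−j+1}` for all `i`
    (hV : ∀ (j : Fin (s+1)) (i : Fin (r+1)), ∑ t, V j t * (P i t * Q (Fin.rev j) t) = 0)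
    -- `P_i ⋆ Q_j` is the unique common zero of `H_{r−i+1}` and `V_{s−j+1}`
    (huniq : ∀ (i : Fin (r+1)) (j : Fin (s+1)) (x : Fin 3 → K), x ≠ 0 →
      (∑ t, H (Fin.rev i) t * x t = 0) → (∑ t, V (Fin.rev j) t * x t = 0) →
      ∃ c : K, x = c • fun t => P i t * Q j t)
    -- `P_i ⋆ Q_j` lies on no other grid line
    (hHnot : ∀ (i : Fin (r+1)) (j : Fin (s+1)) (k : Fin (r+1)), k ≠ Fin.rev i →
      ∑ t, H k t * (P i t * Q j t) ≠ 0)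
    (hVnot : ∀ (i : Fin (r+1)) (j : Fin (s+1)) (l : Fin (s+1)), l ≠ Fin.rev j →
      ∑ t, V l t * (P i t * Q j t) ≠ 0) :
    Ideal.span (Set.range fun k : Fin (m (Fin.last r) + n (Fin.last s)) =>
        gridGen H V m n k) = gridIdeal P Q m n ∧
    ∀ T : Set (MvPolynomial (Fin 3) K),
      T ⊂ Set.range (fun k : Fin (m (Fin.last r) + n (Fin.last s)) => gridGen H V m n k) →
      Ideal.span T ≠ gridIdeal P Q m n :=
  gridIdeal_eq_span_gridGen_general (p := fun i j t => P i t * Q j t)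
    (fun i _ => (hm1 i).trans (Nat.le_add_right _ _)) (fun i => hm i.le_last)
    (fun j => hn j.le_last) (fun i j h => mul_ne_zero (hP0 i 0) (hQ0 j 0) (congrFun h 0))
    (fun i j => linearIndependent_pair_of_forall_ne_smul (hnp (.inl i) (.inr j) Sum.inl_ne_inr)
      (hnp (.inr j) (.inl i) Sum.inr_ne_inl))
    hH hV hHnot hVnot
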